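/- Let κ ∈ ℤ_{>0} ∪ {∞}, R ∈ ℤ_{≥0}^m, C ∈ ℤ_{≥0}^n with |R| = |C| = N, and assume T_κ(R,C) > 0. Then lim_{s→∞} (1/s²) ln I_κ(R^{(s)},C^{(s)}) = −mn·H^max_κ(N/(mn)) + n·Σ_{i=1}^m H^max_κ(r_i/n) + m·Σ_{j=1}^n H^max_κ(c_j/m). -/

import Mathlib

open Real Filter Finset

noncomputable section

/-- `ω(n) = n^n / n!`. -/
def omegaFn (n : ℕ) : ℝ := (n : ℝ) ^ n / (n.factorial : ℝ)

/-- `Ω(V)`: the sum of `ω(v)` over the entries of a vector `V`. -/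
def OmegaVec {I : Type*} [Fintype I] (V : I → ℕ) : ℝ := ∑ i, omegaFn (V i)

/-- `Ω(K)`: the sum of `ω(k)` over the entries of a matrix `K`. -/
def OmegaMat {I J : Type*} [Fintype I] [Fintype J] (K : I → J → ℕ) : ℝ :=
  ∑ i, ∑ j, omegaFn (K i j)

/-- `T_K(R,C)`: the number of nonnegative-integer matrices with row sums `R`,
column sums `C`, and entries bounded by `K` (a bound of `⊤` means unbounded). -/
def tableCount {I J : Type*} [Fintype I] [Fintype J]
    (K : I → J → ℕ∞) (R : I → ℕ) (C : J → ℕ) : ℕ :=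
  Set.ncard {A : I → J → ℕ |
    (∀ i, ∑ j, A i j = R i) ∧ (∀ j, ∑ i, A i j = C j) ∧ ∀ i j, (A i j : ℕ∞) ≤ K i j}

/-- The `s`-fold cloning of a margin vector. -/
def cloneVec {m : ℕ} (s : ℕ) (R : Fin m → ℕ) : Fin s × Fin m → ℕ :=
  fun p => s * R p.2

/-- The `s`-fold cloning of a bound matrix. -/
def cloneMat {m n : ℕ} (s : ℕ) (K : Fin m → Fin n → ℕ∞) :
    Fin s × Fin m → Fin s × Fin n → ℕ∞ :=
  fun p q => K p.2 q.2

/-- The mean of the truncated geometric distribution on `{0,…,κ}` with ratio `q`. -/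
def tgMean (κ : ℕ∞) (q : ℝ) : ℝ :=
  if κ = ⊤ then q / (1 - q)
  else (∑ t ∈ Finset.range (κ.toNat + 1), (t : ℝ) * q ^ t) /
    (∑ t ∈ Finset.range (κ.toNat + 1), q ^ t)

/-- The parameter `q(x;κ)` of the truncated geometric distribution `TG(x;κ)` with mean `x`. -/
def tgQ (κ : ℕ∞) (x : ℝ) : ℝ := sInf {q : ℝ | 0 ≤ q ∧ x ≤ tgMean κ q}

/-- The parameter `p(x;κ)` of the truncated geometric distribution `TG(x;κ)` with mean `x`. -/
def tgP (κ : ℕ∞) (x : ℝ) : ℝ :=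
  if κ = ⊤ then 1 - tgQ κ x
  else (∑ t ∈ Finset.range (κ.toNat + 1), tgQ κ x ^ t)⁻¹

/-- The probability mass function of `TG(x;κ)`: `Pr[X=t] = p q^t` for `t ∈ {0,…,κ}`. -/
def tgPMF (κ : ℕ∞) (x : ℝ) (t : ℕ) : ℝ :=
  if (t : ℕ∞) ≤ κ then tgP κ x * tgQ κ x ^ t else 0

/-- `H^max_κ(x)`: the (base-e) entropy of the truncated geometric distribution `TG(x;κ)`. -/
def Hmax (κ : ℕ∞) (x : ℝ) : ℝ := -∑' t : ℕ, tgPMF κ x t * Real.log (tgPMF κ x t)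

/-- The `(κ+1)`-nomial coefficient `(n choose r)_κ`: the coefficient of `x^r` in
`(1+x+⋯+x^κ)^n`; for `κ = ∞` it is `(r+n-1).choose r`. -/
def knomial (κ : ℕ∞) (n r : ℕ) : ℕ :=
  if κ = ⊤ then (r + n - 1).choose r
  else ((∑ t ∈ Finset.range (κ.toNat + 1), (Polynomial.X : Polynomial ℕ) ^ t) ^ n).coeff r

/-- The independence-heuristic estimate `I_κ(R,C)`. -/
def indepEst (κ : ℕ∞) {I J : Type*} [Fintype I] [Fintype J] (R : I → ℕ) (C : J → ℕ) : ℝ :=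
  ((knomial κ (Fintype.card I * Fintype.card J) (∑ i, R i) : ℝ))⁻¹ *
    (∏ i, (knomial κ (Fintype.card J) (R i) : ℝ)) *
    ∏ j, (knomial κ (Fintype.card I) (C j) : ℝ)

/-- The transportation polytope `Π_κ(R,C)` of real matrices with entries in `[0,κ]`,
row sums `R` and column sums `C`. -/
def transportPolytope (κ : ℕ∞) {m n : ℕ} (R : Fin m → ℕ) (C : Fin n → ℕ) :
    Set (Fin m → Fin n → ℝ) :=
  {Z | (∀ i j, 0 ≤ Z i j) ∧ (∀ i j, κ ≠ ⊤ → Z i j ≤ (κ.toNat : ℝ)) ∧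
    (∀ i, ∑ j, Z i j = (R i : ℝ)) ∧ ∀ j, ∑ i, Z i j = (C j : ℝ)}

/-- The generating function `G(x,y) = ∏_{i,j} (1 + x_i y_j + ⋯ + (x_i y_j)^{k_{ij}})`. -/
def genFun {m n : ℕ} (K : Fin m → Fin n → ℕ) (x : Fin m → ℝ) (y : Fin n → ℝ) : ℝ :=
  ∏ i, ∏ j, ∑ t ∈ Finset.range (K i j + 1), (x i * y j) ^ t

/-- The monomial `x^R = ∏_i x_i^{r_i}`. -/
def monom {m : ℕ} (x : Fin m → ℝ) (R : Fin m → ℕ) : ℝ := ∏ i, x i ^ R i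

/-- The concave roof function `f_K(R,C)`: the supremum of `∑_t α_t ln T_K(R^t,C^t)` over
convex combinations of integer margins averaging to `(R,C)` (and `⊥ = -∞` if none exist). -/
def fK {m n : ℕ} (K : Fin m → Fin n → ℕ) (R : Fin m → ℝ) (C : Fin n → ℝ) : EReal :=
  sSup {v : EReal | ∃ (p : ℕ) (α : Fin p → ℝ)
    (Rs : Fin p → Fin m → ℕ) (Cs : Fin p → Fin n → ℕ),
    1 ≤ p ∧ (∀ t, 0 ≤ α t) ∧ ∑ t, α t = 1 ∧
    (∀ i, ∑ t, α t * (Rs t i : ℝ) = R i) ∧ (∀ j, ∑ t, α t * (Cs t j : ℝ) = C j) ∧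
    (∀ t, 0 < tableCount (fun i j => (K i j : ℕ∞)) (Rs t) (Cs t)) ∧
    v = ((∑ t, α t * Real.log (tableCount (fun i j => (K i j : ℕ∞)) (Rs t) (Cs t)) : ℝ) : EReal)}

/-- `e^x` for an extended real `x`, with `e^{-∞} = 0`. -/
def expE (e : EReal) : ℝ := if e = ⊥ then 0 else Real.exp e.toReal

end

/-!
Each `(κ + 1)`-nomial coefficient `(n choose k)_κ` equals `exp (n * H^max_κ(k / n))` up to a factor
polynomial in `n`, and the theorem is the logarithm of the product of these estimates.

For finite `κ`, put `F = (1 + X + ⋯ + X ^ κ) ^ n` and let `q` be the ratio of `TG(k / n; κ)`, so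
that `n * H^max_κ(k / n) = log (F(q) / q ^ k)`. The coefficient of `X ^ k` is at most
`F(q) / q ^ k`, since all the terms of `F(q)` are nonnegative. Conversely, the coefficients of `F`
are log-concave, so some other ratio `q'` makes the `k`-th term the largest of the `κ * n + 1` terms
of `F(q')`; hence `F(q') / q' ^ k` is at most `κ * n + 1` times the coefficient, while `q`, where
the tilted mean is `k`, minimizes `F(q) / q ^ k`.

For `κ = ∞`, stars and bars give `(n choose k)_∞ = n / (n + k) * (n + k choose k)`.
-/

section TotalPositivity

/-- Total positivity of order two: all `2 × 2` minors of the (possibly infinite) matrix `A` are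
nonnegative. -/
def IsTP2 {R α β : Type*} [Mul R] [LE R] [Preorder α] [Preorder β] (A : α → β → R) : Prop :=
  ∀ ⦃i i' j j'⦄, i ≤ i' → j ≤ j' → A i j' * A i' j ≤ A i j * A i' j'

-- Cauchy-Binet: twice the minor of the product is the sum, over ordered pairs `(u, v)`, of a minor
-- of `A` times a minor of `B`; the two minors have the same sign.
theorem IsTP2.mul {R α β γ : Type*} [CommRing R] [LinearOrder R] [IsStrictOrderedRing R]
    [Preorder α] [LinearOrder β] [Preorder γ] {A : α → β → R} {B : β → γ → R}
    (hA : IsTP2 A) (hB : IsTP2 B) (s : Finset β) :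
    IsTP2 fun i j => ∑ u ∈ s, A i u * B u j := by
  intro i i' j j' hi hj
  have minors_nonneg : 0 ≤ ∑ u ∈ s, ∑ v ∈ s,
      (A i u * A i' v - A i v * A i' u) * (B u j * B v j' - B u j' * B v j) := by
    refine sum_nonneg fun u _ => sum_nonneg fun v _ => ?_
    rcases le_total u v with huv | hvu
    · exact mul_nonneg (sub_nonneg.2 (hA hi huv)) (sub_nonneg.2 (hB huv hj))
    · refine mul_nonneg_of_nonpos_of_nonpos (sub_nonpos.2 (hA hi hvu)) (sub_nonpos.2 ?_)
      simpa only [mul_comm] using hB hvu hj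
  have cauchy_binet : ∑ u ∈ s, ∑ v ∈ s,
      (A i u * A i' v - A i v * A i' u) * (B u j * B v j' - B u j' * B v j) =
      2 * ((∑ u ∈ s, A i u * B u j) * ∑ v ∈ s, A i' v * B v j' -
        (∑ u ∈ s, A i u * B u j') * ∑ v ∈ s, A i' v * B v j) := by
    have antisymm : ∑ u ∈ s, ∑ v ∈ s, A i v * A i' u * (B u j * B v j' - B u j' * B v j) =
        -∑ u ∈ s, ∑ v ∈ s, A i u * A i' v * (B u j * B v j' - B u j' * B v j) := by
      rw [sum_comm, ← sum_neg_distrib]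
      refine sum_congr rfl fun u _ => ?_
      rw [← sum_neg_distrib]
      exact sum_congr rfl fun v _ => by ring
    simp only [sub_mul _ _ (_ - _), sum_sub_distrib, antisymm]
    rw [sub_neg_eq_add, ← two_mul, sum_mul_sum, sum_mul_sum]
    simp only [← sum_sub_distrib]
    exact congrArg (2 * ·) (sum_congr rfl fun u _ => sum_congr rfl fun v _ => by ring)
  exact sub_nonneg.1 (nonneg_of_mul_nonneg_right (cauchy_binet ▸ minors_nonneg) two_pos)

end TotalPositivity

section LogConcave

/-- Log-concave sequences of nonnegative numbers. Asking for `a i * a l ≤ a j * a k` at all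
`i ≤ j, k ≤ l` with `i + l = j + k`, and not just for `a i * a (i + 2) ≤ a (i + 1) ^ 2`, excludes
internal zeros. -/
structure IsLogConcaveSeq {R : Type*} [MulZeroClass R] [LE R] (a : ℕ → R) : Prop where
  nonneg : ∀ k, 0 ≤ a k
  mul_le_mul : ∀ ⦃i j k l⦄, i ≤ j → i ≤ k → i + l = j + k → a i * a l ≤ a j * a k

/-- The lower triangular Toeplitz matrix with entries `a (i - j)`; multiplying these matrices
amounts to convolving the sequences. -/
def toeplitz {R : Type*} [Zero R] (a : ℕ → R) (i j : ℕ) : R := if j ≤ i then a (i - j) else 0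

theorem toeplitz_of_le {R : Type*} [Zero R] (a : ℕ → R) {i j : ℕ} (h : j ≤ i) :
    toeplitz a i j = a (i - j) :=
  if_pos h

theorem toeplitz_of_lt {R : Type*} [Zero R] (a : ℕ → R) {i j : ℕ} (h : i < j) :
    toeplitz a i j = 0 :=
  if_neg h.not_ge

theorem sum_toeplitz_mul_toeplitz {R : Type*} [NonUnitalNonAssocSemiring R] (a b : ℕ → R)
    {i j N : ℕ} (hj : j ≤ i) (hi : i < N) : ∑ u ∈ range N, toeplitz a i u * toeplitz b u j =
      ∑ p ∈ antidiagonal (i - j), a p.1 * b p.2 := by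
  refine (sum_of_injOn (fun p => j + p.2) ?_ ?_ ?_ ?_).symm
  · intro p hp p' hp' h
    simp only [mem_coe, HasAntidiagonal.mem_antidiagonal] at hp hp' h
    ext <;> omega
  · intro p hp
    simp only [mem_coe, HasAntidiagonal.mem_antidiagonal, mem_range] at hp ⊢
    omega
  · intro u _ hu
    rcases lt_or_ge i u with hiu | hui
    · rw [toeplitz_of_lt a hiu, zero_mul]
    rcases lt_or_ge u j with huj | hju
    · rw [toeplitz_of_lt b huj, mul_zero]
    · exact absurd ⟨(i - u, u - j), by simp; omega, by simp; omega⟩ hu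
  · intro p hp
    rw [HasAntidiagonal.mem_antidiagonal] at hp
    rw [toeplitz_of_le a (by omega), toeplitz_of_le b (by omega)]
    congr 2 <;> omega

namespace IsLogConcaveSeq

variable {R : Type*} [CommRing R] [LinearOrder R] [IsStrictOrderedRing R] {a b : ℕ → R}

theorem isTP2_toeplitz (ha : IsLogConcaveSeq a) : IsTP2 (toeplitz a) := by
  have toeplitz_nonneg (i j : ℕ) : 0 ≤ toeplitz a i j := by
    unfold toeplitz
    split_ifs
    exacts [ha.nonneg _, le_rfl]
  intro i i' j j' hi hj
  rcases lt_or_ge i j' with h | h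
  · rw [toeplitz_of_lt a h, zero_mul]
    exact mul_nonneg (toeplitz_nonneg _ _) (toeplitz_nonneg _ _)
  · rw [toeplitz_of_le a h, toeplitz_of_le a (by omega), toeplitz_of_le a (by omega),
      toeplitz_of_le a (by omega)]
    exact ha.mul_le_mul (by omega) (by omega) (by omega)

theorem convolution (ha : IsLogConcaveSeq a) (hb : IsLogConcaveSeq b) :
    IsLogConcaveSeq fun k => ∑ p ∈ antidiagonal k, a p.1 * b p.2 where
  nonneg _ := sum_nonneg fun _ _ => mul_nonneg (ha.nonneg _) (hb.nonneg _)
  mul_le_mul i j k l hij hik h := by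
    have key := ha.isTP2_toeplitz.mul hb.isTP2_toeplitz (range (l + 1))
      (show j ≤ l by omega) (Nat.zero_le (j - i))
    simp only [sum_toeplitz_mul_toeplitz a b (show j - i ≤ j by omega) (show j < l + 1 by omega),
      sum_toeplitz_mul_toeplitz a b (Nat.zero_le j) (show j < l + 1 by omega),
      sum_toeplitz_mul_toeplitz a b (show j - i ≤ l by omega) (show l < l + 1 by omega),
      sum_toeplitz_mul_toeplitz a b (Nat.zero_le l) (show l < l + 1 by omega)] at key
    rwa [show j - (j - i) = i by omega, show l - (j - i) = k by omega] at key

theorem coeff_mul {P Q : Polynomial R} (hP : IsLogConcaveSeq P.coeff)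
    (hQ : IsLogConcaveSeq Q.coeff) : IsLogConcaveSeq (P * Q).coeff := by
  simpa only [← Polynomial.coeff_mul] using hP.convolution hQ

theorem coeff_pow {P : Polynomial R} (hP : IsLogConcaveSeq P.coeff) (n : ℕ) :
    IsLogConcaveSeq (P ^ n).coeff := by
  induction n with
  | zero =>
    refine ⟨fun k => ?_, fun i j k l _ _ _ => ?_⟩
    · rw [pow_zero, Polynomial.coeff_one]; split_ifs <;> simp
    · simp only [pow_zero, Polynomial.coeff_one]; split_ifs <;> simp <;> omega
  | succ n ih => exact pow_succ P n ▸ ih.coeff_mul hP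

theorem tilt (ha : IsLogConcaveSeq a) {q : R} (hq : 0 ≤ q) :
    IsLogConcaveSeq fun k => a k * q ^ k where
  nonneg k := mul_nonneg (ha.nonneg k) (pow_nonneg hq k)
  mul_le_mul i j k l hij hik h := by
    calc a i * q ^ i * (a l * q ^ l) = a i * a l * q ^ (i + l) := by ring
      _ ≤ a j * a k * q ^ (i + l) :=
        mul_le_mul_of_nonneg_right (ha.mul_le_mul hij hik h) (pow_nonneg hq _)
      _ = a j * q ^ j * (a k * q ^ k) := by rw [h]; ring

theorem le_of_eq_succ (ha : IsLogConcaveSeq a) {k : ℕ} (hk : 0 < a k) (h : a k = a (k + 1))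
    (j : ℕ) : a j ≤ a k := by
  rcases le_total k j with hkj | hjk
  · induction j, hkj using Nat.le_induction with
    | base => exact le_rfl
    | succ j hkj ih =>
      refine le_trans (le_of_mul_le_mul_left ?_ hk) ih
      simpa only [h] using ha.mul_le_mul (Nat.le_succ k) hkj (by omega : k + (j + 1) = k + 1 + j)
  · induction hjk using Nat.decreasingInduction with
    | self => exact le_rfl
    | of_succ j hjk ih =>
      refine le_trans (le_of_mul_le_mul_right ?_ hk) ih
      simpa only [← h] using
        ha.mul_le_mul (Nat.le_succ j) (by omega : j ≤ k) (by omega : j + (k + 1) = j + 1 + k)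

theorem pos_of_le (ha : IsLogConcaveSeq a) {k n : ℕ} (h0 : 0 < a 0) (hn : 0 < a n) (hk : k ≤ n) :
    0 < a k := by
  have : 0 < a k * a (n - k) :=
    (mul_pos h0 hn).trans_le (ha.mul_le_mul (Nat.zero_le _) (Nat.zero_le _) (by omega))
  exact pos_of_mul_pos_left this (ha.nonneg _)

theorem exists_tilt_le {K : Type*} [Field K] [LinearOrder K] [IsStrictOrderedRing K] {a : ℕ → K}
    (ha : IsLogConcaveSeq a) {k : ℕ} (hk : 0 < a k) (hk' : 0 < a (k + 1)) :
    ∃ q > 0, ∀ j, a j * q ^ j ≤ a k * q ^ k := by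
  have hq : 0 < a k / a (k + 1) := div_pos hk hk'
  refine ⟨a k / a (k + 1), hq, (ha.tilt hq.le).le_of_eq_succ (mul_pos hk (pow_pos hq k)) ?_⟩
  rw [pow_succ']
  field_simp

end IsLogConcaveSeq

end LogConcave

section Polynomial

open Polynomial

theorem mul_eval_derivative_eq_sum {R : Type*} [CommSemiring R] (P : R[X]) (q : R) :
    q * P.derivative.eval q = ∑ t ∈ range (P.natDegree + 1), t * (P.coeff t * q ^ t) := by
  rw [derivative_eval, sum_over_range _ (by simp), mul_sum]
  refine sum_congr rfl fun t _ => ?_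
  cases t <;> simp [pow_succ]; ring

theorem mul_eval_derivative_pow {R : Type*} [CommRing R] {P : R[X]} {q μ : R}
    (h : q * P.derivative.eval q = μ * P.eval q) (n : ℕ) :
    q * (P ^ n).derivative.eval q = n * μ * (P ^ n).eval q := by
  cases n with
  | zero => simp
  | succ n =>
    rw [derivative_pow]
    simp only [eval_mul, eval_C, eval_pow, Nat.add_sub_cancel]
    linear_combination (n + 1 : ℕ) * P.eval q ^ n * h

theorem coeff_mul_pow_le_eval {R : Type*} [Semiring R] [PartialOrder R] [IsOrderedRing R]
    {P : R[X]} {q : R} (hP : ∀ t, 0 ≤ P.coeff t) (hq : 0 ≤ q) (k : ℕ) :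
    P.coeff k * q ^ k ≤ P.eval q := by
  have term_nonneg (t : ℕ) : 0 ≤ P.coeff t * q ^ t := mul_nonneg (hP t) (pow_nonneg hq t)
  rw [eval_eq_sum_range]
  rcases le_or_gt k P.natDegree with hk | hk
  · exact single_le_sum (fun t _ => term_nonneg t) (mem_range.2 (Nat.lt_succ_of_le hk))
  · rw [coeff_eq_zero_of_natDegree_lt hk, zero_mul]
    exact sum_nonneg fun t _ => term_nonneg t

variable {P : ℝ[X]} {k : ℕ} {q : ℝ}

-- As a function of `log q'`, the ratio `P(q') / q' ^ k` is convex, and `hmean` makes `q` a critical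
-- point of it.
theorem pow_mul_eval_le_pow_mul_eval (hP : ∀ t, 0 ≤ P.coeff t) (hq : 0 < q)
    (hmean : q * P.derivative.eval q = k * P.eval q) {q' : ℝ} (hq' : 0 < q') :
    q' ^ k * P.eval q ≤ q ^ k * P.eval q' := by
  set z := Real.log (q' / q)
  have hz : q' = q * Real.exp z := by rw [Real.exp_log (div_pos hq' hq)]; field_simp
  have tangent (t : ℕ) : Real.exp z ^ k * (1 + (t - k) * z) ≤ Real.exp z ^ t := by
    calc Real.exp z ^ k * (1 + (t - k) * z)
        ≤ Real.exp z ^ k * Real.exp ((t - k) * z) := by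
          gcongr
          rw [add_comm]
          exact Real.add_one_le_exp _
      _ = Real.exp z ^ t := by
          rw [← Real.exp_nat_mul, ← Real.exp_nat_mul, ← Real.exp_add]
          ring_nf
  have sum_tangent : Real.exp z ^ k * P.eval q = ∑ t ∈ range (P.natDegree + 1),
      P.coeff t * q ^ t * (Real.exp z ^ k * (1 + (t - k) * z)) := by
    calc Real.exp z ^ k * P.eval q
        = Real.exp z ^ k * (P.eval q + z * (q * P.derivative.eval q - k * P.eval q)) := by
          rw [hmean]; ring
      _ = _ := by
          rw [mul_eval_derivative_eq_sum, eval_eq_sum_range]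
          simp only [mul_sum, ← sum_sub_distrib, ← sum_add_distrib]
          exact sum_congr rfl fun t _ => by ring
  calc q' ^ k * P.eval q = q ^ k * (Real.exp z ^ k * P.eval q) := by rw [hz]; ring
    _ ≤ q ^ k * ∑ t ∈ range (P.natDegree + 1), P.coeff t * q ^ t * Real.exp z ^ t := by
        rw [sum_tangent]
        gcongr with t
        exacts [mul_nonneg (hP t) (by positivity), tangent t]
    _ = q ^ k * P.eval q' := by
        rw [eval_eq_sum_range, hz]
        simp only [mul_pow, mul_assoc]

-- Re-tilting from `q` to a `q'` at which the `k`-th term is the largest one can only increase the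
-- ratio of the whole sum to the `k`-th term.
theorem eval_le_natDegree_succ_mul_coeff_mul_pow (hP : IsLogConcaveSeq P.coeff) (hq : 0 < q)
    (hmean : q * P.derivative.eval q = k * P.eval q) (hk : 0 < P.coeff k)
    (hk' : 0 < P.coeff (k + 1)) :
    P.eval q ≤ (P.natDegree + 1) * (P.coeff k * q ^ k) := by
  obtain ⟨q', hq', hmax⟩ := hP.exists_tilt_le hk hk'
  refine le_of_mul_le_mul_left ?_ (pow_pos hq' k)
  calc q' ^ k * P.eval q ≤ q ^ k * P.eval q' :=
        pow_mul_eval_le_pow_mul_eval hP.nonneg hq hmean hq'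
    _ ≤ q ^ k * ((P.natDegree + 1) * (P.coeff k * q' ^ k)) := by
        rw [eval_eq_sum_range]
        gcongr
        simpa using sum_le_card_nsmul (range (P.natDegree + 1)) _ _ fun t _ => hmax t
    _ = q' ^ k * ((P.natDegree + 1) * (P.coeff k * q ^ k)) := by ring

end Polynomial

section TruncatedGeometric

open Polynomial

/-- The polynomial `1 + X + ⋯ + X ^ K`, whose value at `q` normalizes the truncated geometric
weights `q ^ t` and whose `n`-th power has the `(K + 1)`-nomial coefficients. -/
noncomputable def truncGeom (K : ℕ) : ℝ[X] := ∑ t ∈ range (K + 1), X ^ t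

theorem coeff_truncGeom (K t : ℕ) : (truncGeom K).coeff t = if t ≤ K then 1 else 0 := by
  simp [truncGeom, coeff_X_pow]

theorem monic_truncGeom (K : ℕ) : (truncGeom K).Monic :=
  monic_geom_sum_X K.succ_ne_zero

theorem natDegree_truncGeom (K : ℕ) : (truncGeom K).natDegree = K := by
  refine natDegree_eq_of_le_of_coeff_ne_zero ?_ (by simp [coeff_truncGeom])
  exact natDegree_le_iff_coeff_eq_zero.2 fun t ht => by simp [coeff_truncGeom, ht]

theorem natDegree_truncGeom_pow (K n : ℕ) : (truncGeom K ^ n).natDegree = K * n := by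
  rw [(monic_truncGeom K).natDegree_pow, natDegree_truncGeom, mul_comm]

theorem isLogConcaveSeq_coeff_truncGeom_pow (K n : ℕ) :
    IsLogConcaveSeq (truncGeom K ^ n).coeff := by
  refine IsLogConcaveSeq.coeff_pow ⟨fun t => ?_, fun i j k l _ _ _ => ?_⟩ n
  · rw [coeff_truncGeom]; split_ifs <;> simp
  · simp only [coeff_truncGeom]; split_ifs <;> simp <;> omega

theorem eval_truncGeom (K : ℕ) (q : ℝ) :
    (truncGeom K).eval q = ∑ t ∈ range (K + 1), q ^ t :=
  eval_geom_sum

theorem eval_truncGeom_pos (K : ℕ) {q : ℝ} (hq : 0 ≤ q) : 0 < (truncGeom K).eval q := by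
  rw [eval_truncGeom]
  exact geom_sum_pos hq K.succ_ne_zero

theorem mul_eval_derivative_truncGeom (K : ℕ) (q : ℝ) :
    q * (truncGeom K).derivative.eval q = ∑ t ∈ range (K + 1), (t : ℝ) * q ^ t := by
  rw [mul_eval_derivative_eq_sum, natDegree_truncGeom]
  refine sum_congr rfl fun t ht => ?_
  rw [coeff_truncGeom, if_pos (Nat.lt_succ_iff.1 (mem_range.1 ht)), one_mul]

theorem tgMean_natCast (K : ℕ) (q : ℝ) :
    tgMean K q = q * (truncGeom K).derivative.eval q / (truncGeom K).eval q := by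
  simp [tgMean, mul_eval_derivative_truncGeom, eval_truncGeom]

theorem tgMean_natCast_lt {K : ℕ} (hK : 0 < K) {q : ℝ} (hq : 0 ≤ q) : tgMean K q < K := by
  rw [tgMean_natCast, div_lt_iff₀ (eval_truncGeom_pos K hq), mul_eval_derivative_truncGeom,
    eval_truncGeom, mul_sum]
  refine sum_lt_sum (fun t ht => ?_) ⟨0, by simp, by simpa using hK⟩
  have : t ≤ K := Nat.lt_succ_iff.1 (mem_range.1 ht)
  gcongr

-- For `q ≥ 1`, the defect `K * F(q) - q * F'(q) = ∑ t, (K - t) * q ^ t`, with `F = truncGeom K`,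
-- has order `q ^ (K - 1)` only.
theorem exists_le_tgMean_natCast {K : ℕ} {x : ℝ} (hx : 0 ≤ x) (hxK : x < K) :
    ∃ q, 0 ≤ q ∧ x ≤ tgMean K q := by
  obtain ⟨k, rfl⟩ : ∃ k, K = k + 1 :=
    Nat.exists_eq_add_one.2 (by exact_mod_cast hx.trans_lt hxK)
  set K := k + 1
  have hd : 0 < K - x := sub_pos.2 hxK
  set q : ℝ := K ^ 2 / (K - x) with hq
  have hq1 : 1 ≤ q := by
    rw [hq, one_le_div hd]
    have : (1 : ℝ) ≤ K := by simp [K]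
    nlinarith
  have hq0 : 0 ≤ q := zero_le_one.trans hq1
  have defect_le : K * (truncGeom K).eval q - q * (truncGeom K).derivative.eval q ≤
      (K - x) * (truncGeom K).eval q := by
    calc K * (truncGeom K).eval q - q * (truncGeom K).derivative.eval q
        = ∑ t ∈ range K, (K - t) * q ^ t := by
          rw [eval_truncGeom, mul_eval_derivative_truncGeom, mul_sum, ← sum_sub_distrib,
            sum_range_succ, sub_self, add_zero]
          exact sum_congr rfl fun t _ => by ring
      _ ≤ ∑ _t ∈ range K, K * q ^ k := by
          gcongr with _ ht
          · simp
          · exact Nat.lt_succ_iff.1 (mem_range.1 ht)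
      _ = (K - x) * q ^ K := by
          rw [sum_const, card_range, nsmul_eq_mul, pow_succ', ← mul_assoc (K - x) q, hq,
            mul_div_cancel₀ _ hd.ne']
          ring
      _ ≤ (K - x) * (truncGeom K).eval q := by
          gcongr
          rw [eval_truncGeom]
          exact single_le_sum (fun t _ => pow_nonneg hq0 t) (self_mem_range_succ K)
  refine ⟨q, hq0, ?_⟩
  rw [tgMean_natCast, le_div_iff₀ (eval_truncGeom_pos K hq0)]
  linarith

theorem continuousOn_tgMean_natCast (K : ℕ) : ContinuousOn (tgMean K) (Set.Ici 0) := by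
  rw [funext (tgMean_natCast K)]
  exact (continuous_id.mul (Polynomial.continuous _)).continuousOn.div
    (Polynomial.continuous _).continuousOn fun q hq => (eval_truncGeom_pos K hq).ne'

theorem apply_csInf_eq_of_continuousOn {f : ℝ → ℝ} {a x : ℝ} (hf : ContinuousOn f (Set.Ici a))
    (ha : f a ≤ x) (hne : {q | a ≤ q ∧ x ≤ f q}.Nonempty) :
    a ≤ sInf {q | a ≤ q ∧ x ≤ f q} ∧ f (sInf {q | a ≤ q ∧ x ≤ f q}) = x := by
  set S := {q | a ≤ q ∧ x ≤ f q}
  have hbdd : BddBelow S := ⟨a, fun q hq => hq.1⟩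
  have hclosed : IsClosed S := hf.preimage_isClosed_of_isClosed isClosed_Ici isClosed_Ici
  obtain ⟨ha_le, hx_le⟩ : sInf S ∈ S := hclosed.csInf_mem hne hbdd
  obtain ⟨q, ⟨haq, hq_le⟩, hfq⟩ :=
    intermediate_value_Icc ha_le (hf.mono Set.Icc_subset_Ici_self) ⟨ha, hx_le⟩
  exact ⟨ha_le, le_antisymm hq_le (csInf_le hbdd ⟨haq, hfq.ge⟩) ▸ hfq⟩

theorem tgMean_zero (κ : ℕ∞) : tgMean κ 0 = 0 := by
  induction κ with
  | top => simp [tgMean]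
  | coe K => simp [tgMean_natCast]

theorem tgQ_zero (κ : ℕ∞) : tgQ κ 0 = 0 :=
  IsLeast.csInf_eq ⟨⟨le_rfl, (tgMean_zero κ).ge⟩, fun _ hq => hq.1⟩

-- No ratio attains the mean `K`, so that `tgQ K K` is the infimum of the empty set, which is `0`.
theorem tgQ_natCast_self {K : ℕ} (hK : 0 < K) : tgQ K K = 0 := by
  have : {q : ℝ | 0 ≤ q ∧ (K : ℝ) ≤ tgMean K q} = ∅ :=
    Set.eq_empty_of_forall_notMem fun q hq => (tgMean_natCast_lt hK hq.1).not_ge hq.2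
  rw [tgQ, this, Real.sInf_empty]

theorem tgMean_tgQ_natCast {K : ℕ} {x : ℝ} (hx : 0 ≤ x) (hxK : x < K) :
    0 ≤ tgQ K x ∧ tgMean K (tgQ K x) = x :=
  apply_csInf_eq_of_continuousOn (continuousOn_tgMean_natCast K) ((tgMean_zero K).trans_le hx)
    (exists_le_tgMean_natCast hx hxK)

theorem tgQ_natCast_pos {K : ℕ} {x : ℝ} (hx : 0 < x) (hxK : x < K) : 0 < tgQ K x := by
  obtain ⟨hq, hmean⟩ := tgMean_tgQ_natCast hx.le hxK
  refine hq.lt_of_ne fun h => hx.ne ?_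
  rw [← hmean, ← h, tgMean_zero]

theorem tgQ_natCast_mul_eval_derivative {K : ℕ} {x : ℝ} (hx : 0 ≤ x) (hxK : x < K) :
    tgQ K x * (truncGeom K).derivative.eval (tgQ K x) = x * (truncGeom K).eval (tgQ K x) := by
  obtain ⟨hq, hmean⟩ := tgMean_tgQ_natCast hx hxK
  rwa [tgMean_natCast, div_eq_iff (eval_truncGeom_pos K hq).ne'] at hmean

theorem tgQ_top {x : ℝ} (hx : 0 ≤ x) : tgQ ⊤ x = x / (1 + x) := by
  have tgMean_ratio : tgMean ⊤ (x / (1 + x)) = x := by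
    simp only [tgMean, if_true]
    field_simp
    ring
  refine IsLeast.csInf_eq ⟨⟨by positivity, tgMean_ratio.ge⟩, fun q ⟨hq, hxq⟩ => ?_⟩
  simp only [tgMean, if_true] at hxq
  rcases hx.eq_or_lt with rfl | hx
  · simpa using hq
  have hq1 : 0 < 1 - q := by
    by_contra! h
    exact (hx.trans_le hxq).not_ge (div_nonpos_of_nonneg_of_nonpos hq h)
  rw [le_div_iff₀ hq1] at hxq
  rw [div_le_iff₀ (by linarith)]
  linarith

end TruncatedGeometric

section Entropy

theorem Hmax_eq_zero_of_tgQ_eq_zero {κ : ℕ∞} {x : ℝ} (h : tgQ κ x = 0) : Hmax κ x = 0 := by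
  have hp : tgP κ x = 1 := by
    unfold tgP
    split_ifs
    · simp [h]
    · simp [h, sum_range_succ']
  have hterm (t : ℕ) : tgPMF κ x t * Real.log (tgPMF κ x t) = 0 := by
    cases t <;> simp [tgPMF, hp, h]
  simp [Hmax, hterm]

theorem Hmax_zero (κ : ℕ∞) : Hmax κ 0 = 0 :=
  Hmax_eq_zero_of_tgQ_eq_zero (tgQ_zero κ)

theorem Hmax_eq_of_hasSum {κ : ℕ∞} {x : ℝ} (hp : 0 < tgP κ x) (hq : 0 < tgQ κ x)
    (hmass : HasSum (tgPMF κ x) 1) (hmean : HasSum (fun t : ℕ => t * tgPMF κ x t) x) :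
    Hmax κ x = -Real.log (tgP κ x) - x * Real.log (tgQ κ x) := by
  have hterm (t : ℕ) : tgPMF κ x t * Real.log (tgPMF κ x t) =
      tgPMF κ x t * Real.log (tgP κ x) + t * tgPMF κ x t * Real.log (tgQ κ x) := by
    by_cases ht : (t : ℕ∞) ≤ κ
    · simp only [tgPMF, ht, if_true]
      rw [Real.log_mul hp.ne' (pow_pos hq t).ne', Real.log_pow]
      ring
    · simp [tgPMF, ht]
  rw [Hmax, tsum_congr hterm, ((hmass.mul_right _).add (hmean.mul_right _)).tsum_eq]
  ring

theorem tgPMF_natCast_of_lt {K t : ℕ} (x : ℝ) (h : K < t) : tgPMF K x t = 0 :=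
  if_neg (by exact_mod_cast h.not_ge)

theorem tgPMF_natCast_of_le {K t : ℕ} (x : ℝ) (h : t ≤ K) :
    tgPMF K x t = tgQ K x ^ t / (truncGeom K).eval (tgQ K x) := by
  rw [tgPMF, if_pos (by exact_mod_cast h), tgP, eval_truncGeom]
  simp [div_eq_inv_mul]

theorem Hmax_natCast {K : ℕ} {x : ℝ} (hx : 0 < x) (hxK : x < K) :
    Hmax K x = Real.log ((truncGeom K).eval (tgQ K x)) - x * Real.log (tgQ K x) := by
  have hq := tgQ_natCast_pos hx hxK
  have hF := eval_truncGeom_pos K hq.le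
  have hp : tgP K x = ((truncGeom K).eval (tgQ K x))⁻¹ := by simp [tgP, eval_truncGeom]
  have sum_pmf : ∑ t ∈ range (K + 1), tgPMF K x t = 1 := by
    rw [sum_congr rfl fun t ht => tgPMF_natCast_of_le x (Nat.lt_succ_iff.1 (mem_range.1 ht)),
      ← sum_div, ← eval_truncGeom, div_self hF.ne']
  have sum_mul_pmf : ∑ t ∈ range (K + 1), t * tgPMF K x t = x := by
    rw [sum_congr rfl fun t ht => by
        rw [tgPMF_natCast_of_le x (Nat.lt_succ_iff.1 (mem_range.1 ht)), mul_div_assoc'],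
      ← sum_div, ← mul_eval_derivative_truncGeom, div_eq_iff hF.ne',
      tgQ_natCast_mul_eval_derivative hx.le hxK]
  have hmass : HasSum (tgPMF K x) 1 := sum_pmf ▸ hasSum_sum_of_ne_finset_zero
    fun t ht => tgPMF_natCast_of_lt x (by simpa using ht)
  have hmean : HasSum (fun t : ℕ => t * tgPMF K x t) (∑ t ∈ range (K + 1), t * tgPMF K x t) :=
    hasSum_sum_of_ne_finset_zero fun t ht => by
      rw [tgPMF_natCast_of_lt x (by simpa using ht), mul_zero]
  rw [sum_mul_pmf] at hmean
  rw [Hmax_eq_of_hasSum (hp ▸ inv_pos.2 hF) hq hmass hmean, hp, Real.log_inv, neg_neg]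

theorem Hmax_top {x : ℝ} (hx : 0 < x) :
    Hmax ⊤ x = (1 + x) * Real.log (1 + x) - x * Real.log x := by
  have one_sub_ratio : 1 - x / (1 + x) = (1 + x)⁻¹ := by
    field_simp
    ring
  have hq : tgQ ⊤ x = x / (1 + x) := tgQ_top hx.le
  have hp : tgP ⊤ x = (1 + x)⁻¹ := by simp only [tgP, if_true, hq, one_sub_ratio]
  have hpmf : tgPMF ⊤ x = fun t => (1 + x)⁻¹ * (x / (1 + x)) ^ t := by
    funext t
    simp [tgPMF, hp, hq]
  have hnorm : ‖x / (1 + x)‖ < 1 := by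
    rw [Real.norm_of_nonneg (by positivity), div_lt_one (by positivity)]
    linarith
  have hmass : HasSum (tgPMF ⊤ x) 1 := by
    have h := (hasSum_geometric_of_norm_lt_one hnorm).mul_left (1 + x)⁻¹
    rwa [one_sub_ratio, inv_inv, inv_mul_cancel₀ (by positivity), ← hpmf] at h
  have hmean : HasSum (fun t : ℕ => t * tgPMF ⊤ x t) x := by
    have h := (hasSum_coe_mul_geometric_of_norm_lt_one hnorm).mul_left (1 + x)⁻¹
    have value : (1 + x)⁻¹ * (x / (1 + x) / (1 - x / (1 + x)) ^ 2) = x := by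
      rw [one_sub_ratio]
      field_simp
    simpa only [hpmf, value, mul_left_comm (1 + x)⁻¹] using h
  rw [Hmax_eq_of_hasSum (hp ▸ by positivity) (hq ▸ by positivity) hmass hmean, hp, hq,
    Real.log_inv, Real.log_div hx.ne' (by positivity)]
  ring

-- A geometric variable of mean `x` counts the failures, of probability `x / (1 + x)` each,
-- before the first success; the expected number of trials is `1 + x`.
theorem Hmax_top_eq_mul_Hmax_one {x : ℝ} (hx : 0 ≤ x) :
    Hmax ⊤ x = (1 + x) * Hmax (1 : ℕ) (x / (1 + x)) := by
  rcases hx.eq_or_lt with rfl | hx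
  · simp [Hmax_zero]
  have hy : 0 < x / (1 + x) := by positivity
  have hy1 : x / (1 + x) < (1 : ℕ) := by rw [div_lt_iff₀ (by positivity)]; simp
  have hq : tgQ (1 : ℕ) (x / (1 + x)) = x := by
    have hmean := tgQ_natCast_mul_eval_derivative hy.le hy1
    simp only [mul_eval_derivative_truncGeom, eval_truncGeom, sum_range_succ, range_zero,
      sum_empty] at hmean
    field_simp at hmean
    norm_num at hmean
    linarith
  rw [Hmax_top hx, Hmax_natCast hy hy1, hq, eval_truncGeom]
  simp only [sum_range_succ, range_zero, sum_empty, pow_zero, pow_one, zero_add]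
  field_simp

end Entropy

section Multinomial

open Polynomial Topology

theorem coeff_truncGeom_pow (K n r : ℕ) :
    (truncGeom K ^ n).coeff r = (knomial K n r : ℝ) := by
  have map_geom : truncGeom K ^ n =
      ((∑ t ∈ range (K + 1), (X : ℕ[X]) ^ t) ^ n).map (Nat.castRingHom ℝ) := by
    simp [truncGeom, Polynomial.map_sum]
  rw [map_geom, coeff_map]
  simp [knomial]

theorem knomial_zero_right (κ : ℕ∞) (n : ℕ) : knomial κ n 0 = 1 := by
  induction κ with
  | top => simp [knomial]
  | coe K =>
    rw [← Nat.cast_inj (R := ℝ), ← coeff_truncGeom_pow, coeff_zero_eq_eval_zero, eval_pow,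
      eval_truncGeom]
    simp [sum_range_succ']

theorem knomial_natCast_mul_self (K n : ℕ) : knomial K n (K * n) = 1 := by
  rw [← Nat.cast_inj (R := ℝ), ← coeff_truncGeom_pow, ← natDegree_truncGeom_pow,
    ((monic_truncGeom K).pow n).coeff_natDegree, Nat.cast_one]

theorem coeff_truncGeom_pow_pos {K n k : ℕ} (h : k ≤ K * n) : 0 < (truncGeom K ^ n).coeff k :=
  (isLogConcaveSeq_coeff_truncGeom_pow K n).pos_of_le
    (by simp [coeff_truncGeom_pow, knomial_zero_right])
    (by simp [coeff_truncGeom_pow, knomial_natCast_mul_self]) h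

theorem knomial_pos {κ : ℕ∞} {n r : ℕ} (h : (r : ℕ∞) ≤ κ * n) : 0 < knomial κ n r := by
  induction κ with
  | top =>
    rw [knomial, if_pos rfl]
    refine Nat.choose_pos ?_
    rcases n.eq_zero_or_pos with rfl | hn
    · have : r = 0 := by simpa using h
      omega
    · omega
  | coe K =>
    rw [← Nat.cast_pos (α := ℝ), ← coeff_truncGeom_pow]
    exact coeff_truncGeom_pow_pos (by exact_mod_cast h)

theorem log_knomial_natCast_mem_Icc_of_lt {K n k : ℕ} (hk : 0 < k) (hkn : k < K * n) :
    Real.log (knomial K n k) ∈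
      Set.Icc (n * Hmax K (k / n) - Real.log (K * n + 1)) (n * Hmax K (k / n)) := by
  have hn : (0 : ℝ) < n := by exact_mod_cast Nat.pos_of_ne_zero fun h => by simp [h] at hkn
  have hx : (0 : ℝ) < k / n := by positivity
  have hxK : (k / n : ℝ) < K := by rw [div_lt_iff₀ hn]; exact_mod_cast hkn
  set q := tgQ K (k / n)
  have hq : 0 < q := tgQ_natCast_pos hx hxK
  have hP := isLogConcaveSeq_coeff_truncGeom_pow K n
  have hmean : q * (truncGeom K ^ n).derivative.eval q = k * (truncGeom K ^ n).eval q := by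
    rw [mul_eval_derivative_pow (tgQ_natCast_mul_eval_derivative hx.le hxK),
      mul_div_cancel₀ _ hn.ne']
  have entropy : n * Hmax K (k / n) =
      Real.log ((truncGeom K ^ n).eval q) - k * Real.log q := by
    rw [Hmax_natCast hx hxK, eval_pow, Real.log_pow, mul_sub, ← mul_assoc,
      mul_div_cancel₀ _ hn.ne']
  have coeff_pos := coeff_truncGeom_pow_pos hkn.le
  have term_pos : 0 < (truncGeom K ^ n).coeff k * q ^ k := by positivity
  have log_term : Real.log ((truncGeom K ^ n).coeff k * q ^ k) =
      Real.log (knomial K n k) + k * Real.log q := by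
    rw [Real.log_mul coeff_pos.ne' (by positivity), Real.log_pow, coeff_truncGeom_pow]
  have term_le := coeff_mul_pow_le_eval hP.nonneg hq.le k
  have le_term := eval_le_natDegree_succ_mul_coeff_mul_pow hP hq hmean coeff_pos
    (coeff_truncGeom_pow_pos hkn)
  have upper := Real.log_le_log term_pos term_le
  have lower := Real.log_le_log (term_pos.trans_le term_le) le_term
  rw [Real.log_mul (by positivity) term_pos.ne', natDegree_truncGeom_pow] at lower
  push_cast at lower
  constructor <;> linarith

theorem log_knomial_natCast_mem_Icc {K n k : ℕ} (h : k ≤ K * n) :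
    Real.log (knomial K n k) ∈
      Set.Icc (n * Hmax K (k / n) - Real.log (K * n + 1)) (n * Hmax K (k / n)) := by
  have log_nonneg : 0 ≤ Real.log (K * n + 1) :=
    Real.log_nonneg (le_add_of_nonneg_left (by positivity))
  rcases k.eq_zero_or_pos with rfl | hk
  · simp [knomial_zero_right, Hmax_zero, log_nonneg]
  rcases h.eq_or_lt with rfl | hlt
  · obtain ⟨hK, hn⟩ := CanonicallyOrderedAdd.mul_pos.1 hk
    have hx : ((K * n : ℕ) : ℝ) / n = K := by push_cast; field_simp
    rw [knomial_natCast_mul_self, hx, Hmax_eq_zero_of_tgQ_eq_zero (tgQ_natCast_self hK)]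
    simp [log_nonneg]
  · exact log_knomial_natCast_mem_Icc_of_lt hk hlt

theorem tendsto_log_mul_add_one_div_atTop {c : ℝ} (hc : 0 ≤ c) :
    Tendsto (fun x => Real.log (c * x + 1) / x) atTop (𝓝 0) := by
  rcases hc.eq_or_lt with rfl | hc
  · simp
  have h := (Real.tendsto_pow_log_div_mul_add_atTop c⁻¹ (-c⁻¹) 1 (inv_ne_zero hc.ne')).comp
    (tendsto_atTop_add_const_right _ 1 (tendsto_id.const_mul_atTop hc))
  refine h.congr fun x => ?_
  simp only [Function.comp_apply, id, pow_one]
  congr 1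
  field_simp
  ring

theorem tendsto_log_knomial_natCast {K n r : ℕ} (h : r ≤ K * n) :
    Tendsto (fun s : ℕ => Real.log (knomial K (s * n) (s * r)) / s) atTop
      (𝓝 (n * Hmax K (r / n))) := by
  have error_tendsto : Tendsto (fun s : ℕ => Real.log (K * n * s + 1) / s) atTop (𝓝 0) :=
    (tendsto_log_mul_add_one_div_atTop (by positivity)).comp tendsto_natCast_atTop_atTop
  have mem_Icc : ∀ᶠ s : ℕ in atTop, Real.log (knomial K (s * n) (s * r)) / s ∈
      Set.Icc (n * Hmax K (r / n) - Real.log (K * n * s + 1) / s) (n * Hmax K (r / n)) := by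
    filter_upwards [eventually_gt_atTop 0] with s hs
    have hs : (0 : ℝ) < s := by exact_mod_cast hs
    have key := log_knomial_natCast_mem_Icc (show s * r ≤ K * (s * n) by nlinarith)
    push_cast at key
    rw [mul_div_mul_left _ _ hs.ne', show K * (s * n : ℝ) = K * n * s by ring] at key
    constructor
    · rw [le_div_iff₀ hs, sub_mul, div_mul_cancel₀ _ hs.ne']
      linarith [key.1]
    · rw [div_le_iff₀ hs]
      linarith [key.2]
  refine tendsto_of_tendsto_of_tendsto_of_le_of_le' ?_ tendsto_const_nhds
    (mem_Icc.mono fun _ h => h.1) (mem_Icc.mono fun _ h => h.2)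
  simpa using tendsto_const_nhds.sub error_tendsto

theorem knomial_one (n r : ℕ) : knomial (1 : ℕ) n r = n.choose r := by
  simp [knomial, sum_range_succ, coeff_one_add_X_pow]

theorem knomial_top_mul {n : ℕ} (hn : 0 < n) (r : ℕ) :
    knomial ⊤ n r * (n + r) = n * knomial (1 : ℕ) (n + r) r := by
  obtain ⟨n, rfl⟩ := Nat.exists_eq_add_one.2 hn
  rw [knomial_one, knomial, if_pos rfl, show r + (n + 1) - 1 = r + n by omega, Nat.choose_symm_add,
    show n + 1 + r = r + n + 1 by omega,
    Nat.choose_symm_of_eq_add (show r + n + 1 = r + (n + 1) by omega), mul_comm,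
    Nat.add_one_mul_choose_eq, mul_comm]

theorem log_knomial_top_mul {n s : ℕ} (hn : 0 < n) (hs : 0 < s) (r : ℕ) :
    Real.log (knomial ⊤ (s * n) (s * r)) =
      Real.log (knomial (1 : ℕ) (s * (n + r)) (s * r)) + Real.log (n / (n + r)) := by
  have hpos : (0 : ℝ) < knomial (1 : ℕ) (s * (n + r)) (s * r) := by
    exact_mod_cast knomial_pos (by norm_cast; nlinarith)
  have h : (knomial ⊤ (s * n) (s * r) * (s * n + s * r) : ℝ) =
      s * n * knomial (1 : ℕ) (s * (n + r)) (s * r) := by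
    rw [mul_add s n r]
    exact_mod_cast knomial_top_mul (Nat.mul_pos hs hn) (s * r)
  rw [← Real.log_mul hpos.ne' (by positivity)]
  congr 1
  field_simp at h ⊢
  linarith

theorem tendsto_log_knomial_top {n : ℕ} (hn : 0 < n) (r : ℕ) :
    Tendsto (fun s : ℕ => Real.log (knomial ⊤ (s * n) (s * r)) / s) atTop
      (𝓝 (n * Hmax ⊤ (r / n))) := by
  have entropy : n * Hmax ⊤ (r / n) = (n + r : ℕ) * Hmax (1 : ℕ) (r / (n + r : ℕ)) := by
    have hx : (r / n : ℝ) / (1 + r / n) = r / (n + r : ℕ) := by push_cast; field_simp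
    rw [Hmax_top_eq_mul_Hmax_one (by positivity), hx]
    push_cast
    field_simp
  have hlim := (tendsto_log_knomial_natCast (K := 1) (n := n + r) (r := r) (by omega)).add
    (tendsto_const_div_atTop_nhds_zero_nat (Real.log (n / (n + r))))
  rw [← entropy, add_zero] at hlim
  refine hlim.congr' ?_
  filter_upwards [eventually_gt_atTop 0] with s hs
  rw [log_knomial_top_mul hn hs, add_div]

theorem tendsto_log_knomial {κ : ℕ∞} {n r : ℕ} (h : (r : ℕ∞) ≤ κ * n) :
    Tendsto (fun s : ℕ => Real.log (knomial κ (s * n) (s * r)) / s) atTop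
      (𝓝 (n * Hmax κ (r / n))) := by
  induction κ with
  | top =>
    rcases n.eq_zero_or_pos with rfl | hn
    · have : r = 0 := by simpa using h
      simp [this, knomial_zero_right]
    · exact tendsto_log_knomial_top hn r
  | coe K => exact tendsto_log_knomial_natCast (by exact_mod_cast h)

end Multinomial

section IndependenceEstimate

variable {κ : ℕ∞}

theorem natCast_mul_le_mul {r M : ℕ} (s : ℕ) (h : (r : ℕ∞) ≤ κ * M) :
    ((s * r : ℕ) : ℕ∞) ≤ κ * (s * M : ℕ) := by
  push_cast
  rw [mul_left_comm]
  gcongr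

theorem natCast_sum_le_mul_card_mul {I : Type*} [Fintype I] {R : I → ℕ} {M : ℕ}
    (h : ∀ i, (R i : ℕ∞) ≤ κ * M) : ((∑ i, R i : ℕ) : ℕ∞) ≤ κ * (Fintype.card I * M : ℕ) := by
  rw [Nat.cast_sum, Nat.cast_mul, mul_left_comm]
  simpa using sum_le_card_nsmul univ _ _ fun i _ => h i

theorem margins_le_of_tableCount_pos {I J : Type*} [Fintype I] [Fintype J] {R : I → ℕ} {C : J → ℕ}
    (hT : 0 < tableCount (fun (_ : I) (_ : J) => κ) R C) :
    (∀ i, (R i : ℕ∞) ≤ κ * Fintype.card J) ∧ ∀ j, (C j : ℕ∞) ≤ κ * Fintype.card I := by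
  obtain ⟨A, hR, hC, hA⟩ := Set.nonempty_of_ncard_ne_zero hT.ne'
  refine ⟨fun i => ?_, fun j => ?_⟩
  · rw [← hR i, Nat.cast_sum, mul_comm]
    simpa using sum_le_card_nsmul univ _ κ fun j _ => hA i j
  · rw [← hC j, Nat.cast_sum, mul_comm]
    simpa using sum_le_card_nsmul univ _ κ fun i _ => hA i j

theorem log_indepEst {I J : Type*} [Fintype I] [Fintype J] {R : I → ℕ} {C : J → ℕ}
    (hR : ∀ i, (R i : ℕ∞) ≤ κ * Fintype.card J) (hC : ∀ j, (C j : ℕ∞) ≤ κ * Fintype.card I) :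
    Real.log (indepEst κ R C) =
      -Real.log (knomial κ (Fintype.card I * Fintype.card J) (∑ i, R i)) +
      ∑ i, Real.log (knomial κ (Fintype.card J) (R i)) +
      ∑ j, Real.log (knomial κ (Fintype.card I) (C j)) := by
  have ne_zero {M r : ℕ} (h : (r : ℕ∞) ≤ κ * M) : (knomial κ M r : ℝ) ≠ 0 := by
    exact_mod_cast (knomial_pos h).ne'
  have total_ne_zero := inv_ne_zero (ne_zero (natCast_sum_le_mul_card_mul hR))
  have rows_ne_zero := prod_ne_zero_iff.2 fun i (_ : i ∈ univ) => ne_zero (hR i)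
  have cols_ne_zero := prod_ne_zero_iff.2 fun j (_ : j ∈ univ) => ne_zero (hC j)
  rw [indepEst, Real.log_mul (mul_ne_zero total_ne_zero rows_ne_zero) cols_ne_zero,
    Real.log_mul total_ne_zero rows_ne_zero, Real.log_inv,
    Real.log_prod fun i _ => ne_zero (hR i), Real.log_prod fun j _ => ne_zero (hC j)]

theorem sum_cloneVec {m : ℕ} {E : Type*} [AddCommMonoid E] (s : ℕ) (R : Fin m → ℕ)
    (g : ℕ → E) : ∑ p, g (cloneVec s R p) = s • ∑ i, g (s * R i) := by
  simp [cloneVec, Fintype.sum_prod_type]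

theorem log_indepEst_cloneVec {m n : ℕ} {R : Fin m → ℕ} {C : Fin n → ℕ}
    (hR : ∀ i, (R i : ℕ∞) ≤ κ * n) (hC : ∀ j, (C j : ℕ∞) ≤ κ * m) (s : ℕ) :
    Real.log (indepEst κ (cloneVec s R) (cloneVec s C)) =
      -Real.log (knomial κ (s ^ 2 * (m * n)) (s ^ 2 * ∑ i, R i)) +
      s * ∑ i, Real.log (knomial κ (s * n) (s * R i)) +
      s * ∑ j, Real.log (knomial κ (s * m) (s * C j)) := by
  have total : ∑ p, cloneVec s R p = s ^ 2 * ∑ i, R i := by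
    have h := sum_cloneVec s R fun r => r
    rw [h, ← mul_sum, smul_eq_mul, sq, mul_assoc]
  rw [log_indepEst (fun p => by simpa [cloneVec] using natCast_mul_le_mul s (hR p.2))
    fun p => by simpa [cloneVec] using natCast_mul_le_mul s (hC p.2), total]
  simp only [Fintype.card_prod, Fintype.card_fin]
  rw [sum_cloneVec s R fun r => Real.log (knomial κ (s * n) r),
    sum_cloneVec s C fun r => Real.log (knomial κ (s * m) r), nsmul_eq_mul, nsmul_eq_mul,
    show s * m * (s * n) = s ^ 2 * (m * n) by ring]

end IndependenceEstimate

theorem indep_estimate_cloning_entropy_limit_general {m n : ℕ} (κ : ℕ∞)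
    (R : Fin m → ℕ) (C : Fin n → ℕ) (N : ℕ) (hRN : ∑ i, R i = N)
    (hR : ∀ i, (R i : ℕ∞) ≤ κ * n) (hC : ∀ j, (C j : ℕ∞) ≤ κ * m) :
    Filter.Tendsto (fun s : ℕ => (1 / (s : ℝ) ^ 2) *
      Real.log (indepEst κ (cloneVec s R) (cloneVec s C)))
      Filter.atTop
      (nhds (-(m * n : ℝ) * Hmax κ ((N : ℝ) / (m * n)) +
        (n : ℝ) * ∑ i, Hmax κ ((R i : ℝ) / n) +
        (m : ℝ) * ∑ j, Hmax κ ((C j : ℝ) / m))) := by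
  have hN : (N : ℕ∞) ≤ κ * (m * n : ℕ) := by
    simpa [← hRN] using natCast_sum_le_mul_card_mul hR
  have total_limit := (tendsto_log_knomial hN).comp (tendsto_pow_atTop two_ne_zero)
  have rows_limit := tendsto_finsetSum univ fun i _ => tendsto_log_knomial (hR i)
  have cols_limit := tendsto_finsetSum univ fun j _ => tendsto_log_knomial (hC j)
  have hlim := (total_limit.neg.add rows_limit).add cols_limit
  rw [← mul_sum, ← mul_sum, Nat.cast_mul, ← neg_mul] at hlim
  refine hlim.congr' ?_
  filter_upwards [eventually_ne_atTop 0] with s hs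
  rw [log_indepEst_cloneVec hR hC, hRN]
  simp only [Function.comp_apply, ← sum_div, Nat.cast_pow]
  field_simp

/-- **Theorem 3(ii).** The log-asymptotics of the independence estimate
`I_κ(R^{(s)},C^{(s)})`. -/
theorem indep_estimate_cloning_entropy_limit {m n : ℕ} (κ : ℕ∞) (hκ : 1 ≤ κ)
    (R : Fin m → ℕ) (C : Fin n → ℕ) (N : ℕ)
    (hRN : ∑ i, R i = N) (hCN : ∑ j, C j = N)
    (hT : 0 < tableCount (fun (_ : Fin m) (_ : Fin n) => κ) R C) :
    Filter.Tendsto (fun s : ℕ => (1 / (s : ℝ) ^ 2) *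
      Real.log (indepEst κ (cloneVec s R) (cloneVec s C)))
      Filter.atTop
      (nhds (-(m * n : ℝ) * Hmax κ ((N : ℝ) / (m * n)) +
        (n : ℝ) * ∑ i, Hmax κ ((R i : ℝ) / n) +
        (m : ℝ) * ∑ j, Hmax κ ((C j : ℝ) / m))) := by
  obtain ⟨hR, hC⟩ := margins_le_of_tableCount_pos hT
  exact indep_estimate_cloning_entropy_limit_general κ R C N hRN
    (by simpa using hR) (by simpa using hC)
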